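/- arXiv:1506.06117 — 2 statements merged into one kernel-verified Lean document; each statement's English description precedes it below -/
import Mathlib

section
/- Let d₁, d₂ ≥ 1 and let (π^N)_{N≥1} be a sequence of probability measures on [0,1]^{d₁} with ‖π^N − π‖_E → 0 as N → ∞, for some probability measure π on [0,1]^{d₁} that is absolutely continuous with respect to Lebesgue measure. Let K be a Markov kernel from [0,1]^{d₁} to probability measures on [0,1]^{d₂} admitting a triangular transform F_K(x₁, x₂) which, viewed jointly as a function of (x₁, x₂) ∈ [0,1]^{d₁+d₂}, is Hölder continuous. Then ‖π^N ⊗ K − π ⊗ K‖_E → 0 as N → ∞, where π ⊗ K denotes the probability measure π(dx₁) K(x₁, dx₂) on [0,1]^{d₁+d₂}. -/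
/-!
Since `(μ ⊗ K)(B₁ × B₂) = ∫_{B₁} K(x, B₂) μ(dx)`, it is enough that `x ↦ K(x, B₂)` be uniformly
continuous with a modulus independent of `B₂`, and that `μ` and `ν` differ by at most `‖μ - ν‖_E` on
the pieces `B₁ ∩ C` cut out by a grid of half-open cells `C`. Indeed, replacing `K(·, B₂)` by its
value at a corner of each cell then costs `ε` for each measure, and the two resulting sums differ
by at most (number of cells) `· ‖μ - ν‖_E` (`extDistProd_le`).

*Equicontinuity* (`kernel_box_equicontinuous`). The map `(x, a, b) ↦ K(x, [a, b])` is continuous on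
a compact cube, hence uniformly continuous. For continuity, `K(x, [a, b])` is the Lebesgue measure
of the set of `u ∈ [0,1)^{d₂}` whose preimage `F_x⁻¹(u)` lies in `[a, b]`. For fixed `u` the
preimage depends continuously on `x`, by compactness and since `F_x` is injective on the closed
cube (`tendsto_inverse`); and for almost every `u` it avoids the hyperplanes bounding the box,
because triangularity makes the image of `{yᵢ = c}` a graph over the other coordinates
(`tri_null`). Dominated convergence concludes. Of the Hölder bound only the joint continuity of
`F` matters.

*Pieces of boxes* (`le_extDist_inter_cell`). A degenerate closed box is a decreasing limit of
admissible boxes, and `B₁ ∩ C` is an increasing limit of closed, possibly degenerate or empty,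
boxes; the bound by `‖μ - ν‖_E` survives both limits, whether or not the measures charge
hyperplanes.
-/


open MeasureTheory ProbabilityTheory Filter Set
open scoped ENNReal NNReal

noncomputable section

/-- The closed unit cube `[0,1]^d` in `ℝ^d`. -/
def cubeIcc (d : ℕ) : Set (Fin d → ℝ) := Set.univ.pi fun _ => Set.Icc (0 : ℝ) 1

/-- The half-open unit cube `[0,1)^d` in `ℝ^d`. -/
def cubeIco (d : ℕ) : Set (Fin d → ℝ) := Set.univ.pi fun _ => Set.Ico (0 : ℝ) 1

/-- `IsGoodBox a b` : the box `∏ᵢ [aᵢ, bᵢ]` satisfies `0 ≤ aᵢ < bᵢ < 1` for all `i`. -/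
def IsGoodBox {d : ℕ} (a b : Fin d → ℝ) : Prop := ∀ i, 0 ≤ a i ∧ a i < b i ∧ b i < 1

/-- The closed box `∏ᵢ [aᵢ, bᵢ]` in `ℝ^d`. -/
def clBox {d : ℕ} (a b : Fin d → ℝ) : Set (Fin d → ℝ) :=
  Set.univ.pi fun i => Set.Icc (a i) (b i)

/-- The extreme norm distance `‖μ − ν‖_E` between two measures on `ℝ^d`:
the supremum over boxes `∏ᵢ [aᵢ, bᵢ]` with `0 ≤ aᵢ < bᵢ < 1` of `|μ(B) − ν(B)|`. -/
def extDist {d : ℕ} (μ ν : Measure (Fin d → ℝ)) : ℝ :=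
  ⨆ p : {q : (Fin d → ℝ) × (Fin d → ℝ) // IsGoodBox q.1 q.2},
    |(μ (clBox p.1.1 p.1.2)).toReal - (ν (clBox p.1.1 p.1.2)).toReal|

/-- A triangular (Rosenblatt-type) transform `F` of a probability measure `π` on `[0,1]^d`:
the `i`-th component of `F x` depends only on `x_1, …, x_i`, is strictly increasing in `x_i`,
`F` restricts to a bijection of `[0,1)^d` onto itself, and the pushforward of `π` by `F`
is Lebesgue measure on the unit cube. -/
structure IsTriangular {d : ℕ} (π : Measure (Fin d → ℝ))
    (F : (Fin d → ℝ) → (Fin d → ℝ)) : Prop where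
  measurable : Measurable F
  dep : ∀ (i : Fin d) (x y : Fin d → ℝ), (∀ j, j ≤ i → x j = y j) → F x i = F y i
  strictMono : ∀ (i : Fin d), ∀ x ∈ cubeIcc d,
    StrictMonoOn (fun s : ℝ => F (Function.update x i s) i) (Set.Icc (0 : ℝ) 1)
  bijOn : Set.BijOn F (cubeIco d) (cubeIco d)
  map_eq : π.map F = volume.restrict (cubeIco d)

/-- A triangular (Rosenblatt-type) transform of a Markov kernel. -/
structure IsTriangularKernel {d₁ d₂ : ℕ} (K : Kernel (Fin d₁ → ℝ) (Fin d₂ → ℝ))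
    (F : (Fin d₁ → ℝ) → (Fin d₂ → ℝ) → (Fin d₂ → ℝ)) : Prop where
  tri : ∀ x ∈ cubeIcc d₁, IsTriangular (K x) (F x)

/-- `F`, viewed jointly as a function of both of its arguments, is Hölder continuous
(w.r.t. the sup norms). -/
def HolderJointly {d₁ d₂ : ℕ} (F : (Fin d₁ → ℝ) → (Fin d₂ → ℝ) → (Fin d₂ → ℝ)) : Prop :=
  ∃ C : ℝ, 0 ≤ C ∧ ∃ κ ∈ Set.Ioc (0 : ℝ) 1,
    ∀ x ∈ cubeIcc d₁, ∀ x' ∈ cubeIcc d₁, ∀ y ∈ cubeIcc d₂, ∀ y' ∈ cubeIcc d₂,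
      ‖F x y - F x' y'‖ ≤ C * (max ‖x - x'‖ ‖y - y'‖) ^ κ

/-- The extreme norm distance between two measures on `[0,1]^{d₁} × [0,1]^{d₂}`
(boxes in the product space are products of boxes). -/
def extDistProd {d₁ d₂ : ℕ} (μ ν : Measure ((Fin d₁ → ℝ) × (Fin d₂ → ℝ))) : ℝ :=
  ⨆ p : {q : ((Fin d₁ → ℝ) × (Fin d₁ → ℝ)) × ((Fin d₂ → ℝ) × (Fin d₂ → ℝ)) //
      IsGoodBox q.1.1 q.1.2 ∧ IsGoodBox q.2.1 q.2.2},
    |(μ (clBox p.1.1.1 p.1.1.2 ×ˢ clBox p.1.2.1 p.1.2.2)).toReal -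
      (ν (clBox p.1.1.1 p.1.1.2 ×ˢ clBox p.1.2.1 p.1.2.2)).toReal|

namespace ExtremeNorm

/-! ### Cubes and boxes -/

lemma isCompact_cubeIcc (d : ℕ) : IsCompact (cubeIcc d) :=
  isCompact_univ_pi fun _ => isCompact_Icc

lemma isCompact_clBox {d : ℕ} (a b : Fin d → ℝ) : IsCompact (clBox a b) :=
  isCompact_univ_pi fun _ => isCompact_Icc

lemma mem_cubeIcc {d : ℕ} {x : Fin d → ℝ} : x ∈ cubeIcc d ↔ ∀ i, 0 ≤ x i ∧ x i ≤ 1 := by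
  simp only [cubeIcc, mem_univ_pi, mem_Icc]

lemma mem_cubeIco {d : ℕ} {x : Fin d → ℝ} : x ∈ cubeIco d ↔ ∀ i, 0 ≤ x i ∧ x i < 1 := by
  simp only [cubeIco, mem_univ_pi, mem_Ico]

lemma mem_clBox {d : ℕ} {a b x : Fin d → ℝ} : x ∈ clBox a b ↔ ∀ i, a i ≤ x i ∧ x i ≤ b i := by
  simp only [clBox, mem_univ_pi, mem_Icc]

lemma cubeIco_subset (d : ℕ) : cubeIco d ⊆ cubeIcc d := fun _ hx =>
  mem_cubeIcc.2 fun i => ⟨(mem_cubeIco.1 hx i).1, (mem_cubeIco.1 hx i).2.le⟩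

lemma measurableSet_cubeIco (d : ℕ) : MeasurableSet (cubeIco d) :=
  MeasurableSet.univ_pi fun _ => measurableSet_Ico

lemma clBox_subset {d : ℕ} {a b : Fin d → ℝ} (ha : a ∈ cubeIcc d) (hb : b ∈ cubeIcc d) :
    clBox a b ⊆ cubeIcc d := fun _ hx => mem_cubeIcc.2 fun i =>
  ⟨(mem_cubeIcc.1 ha i).1.trans (mem_clBox.1 hx i).1,
    (mem_clBox.1 hx i).2.trans (mem_cubeIcc.1 hb i).2⟩

/-! ### Triangular transforms on the closed cube -/

section Triangular

variable {d : ℕ} {ρ : Measure (Fin d → ℝ)} {F : (Fin d → ℝ) → (Fin d → ℝ)}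

lemma tri_step (h : IsTriangular ρ F) {x y : Fin d → ℝ} (hx : x ∈ cubeIcc d)
    (hy : y ∈ cubeIcc d) (i : Fin d) (hlt : ∀ j < i, x j = y j) (hi : F x i = F y i) :
    x i = y i := by
  refine (h.strictMono i x hx).injOn (mem_cubeIcc.1 hx i) (mem_cubeIcc.1 hy i) ?_
  simp only [Function.update_eq_self]
  rw [hi]
  refine h.dep i _ _ fun j hj => ?_
  rcases hj.lt_or_eq with hj | rfl
  · rw [Function.update_of_ne hj.ne, hlt j hj]
  · simp

/-- The triangular structure makes the inverse triangular: the first coordinates of a point of the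
cube are determined by the first coordinates of its image. -/
lemma tri_agree (h : IsTriangular ρ F) {x y : Fin d → ℝ} (hx : x ∈ cubeIcc d)
    (hy : y ∈ cubeIcc d) (i : Fin d) (hlt : ∀ j ≤ i, F x j = F y j) : x i = y i := by
  induction i using WellFoundedLT.induction with
  | ind i ih =>
    exact tri_step h hx hy i (fun j hj => ih j hj fun k hk => hlt k (hk.trans hj.le)) (hlt i le_rfl)

/-- A triangular transform is injective up to the boundary of the cube, not only on `[0,1)^d`. -/
lemma tri_injOn (h : IsTriangular ρ F) : InjOn F (cubeIcc d) := fun _ hx _ hy hxy =>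
  funext fun i => tri_agree h hx hy i fun _ _ => congrFun hxy _

/-- The image of an axis-parallel hyperplane `yᵢ = c` is Lebesgue-null: it is a graph over the
other coordinates, so its translates in direction `eᵢ` are pairwise disjoint. -/
lemma tri_null (h : IsTriangular ρ F) (hc : ContinuousOn F (cubeIcc d)) (i : Fin d) (c : ℝ) :
    volume (F '' {y ∈ cubeIcc d | y i = c}) = 0 := by
  have hcomp : IsCompact (F '' {y ∈ cubeIcc d | y i = c}) := by
    refine IsCompact.image_of_continuousOn ?_ (hc.mono fun y hy => hy.1)
    exact (isCompact_cubeIcc d).inter_right (isClosed_eq (continuous_apply i) continuous_const)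
  have hsingle : Continuous fun t : ℝ => (Pi.single i t : Fin d → ℝ) :=
    continuous_pi fun j => by
      by_cases hj : j = i
      · subst hj; simpa using continuous_id'
      · simpa [Pi.single_eq_of_ne hj] using continuous_const
  refine Measure.addHaar_eq_zero_of_disjoint_translates volume
    (fun n : ℕ => (Pi.single i (1 / ((n : ℝ) + 1)) : Fin d → ℝ)) ?_ ?_
    hcomp.measurableSet
  · refine ((isCompact_Icc (a := (0 : ℝ)) (b := 1)).image hsingle).isBounded.subset ?_
    rintro _ ⟨n, rfl⟩
    refine ⟨_, ⟨by positivity, ?_⟩, rfl⟩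
    rw [div_le_one (by positivity)]
    linarith [(Nat.cast_nonneg n : (0 : ℝ) ≤ n)]
  · intro n m hnm
    refine Set.disjoint_left.2 ?_
    rintro z hz hz'
    simp only [singleton_add, mem_image] at hz hz'
    obtain ⟨_, ⟨y, ⟨hy, hyc⟩, rfl⟩, hz⟩ := hz
    obtain ⟨_, ⟨y', ⟨hy', hyc'⟩, rfl⟩, hz'⟩ := hz'
    have heq := hz.trans hz'.symm
    have hne : ∀ j, j ≠ i → F y j = F y' j := fun j hj => by
      simpa [Pi.single_eq_of_ne hj] using congrFun heq j
    have hlt : ∀ j < i, y j = y' j := fun j hj =>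
      tri_agree h hy hy' j fun k hk => hne k (hk.trans_lt hj).ne
    have hFi : F y i = F y' i := h.dep i _ _ fun j hj => by
      rcases hj.lt_or_eq with hj | rfl
      · exact hlt j hj
      · rw [hyc, hyc']
    have := congrFun heq i
    simp only [Pi.add_apply, Pi.single_eq_same, hFi, add_left_inj] at this
    apply hnm
    field_simp at this
    have h2 : (m : ℝ) = n := by linarith
    exact_mod_cast h2.symm

lemma tri_measure_clBox [IsProbabilityMeasure ρ] (h : IsTriangular ρ F)
    (hρ : ρ (cubeIcc d) = 1) (hc : ContinuousOn F (cubeIcc d))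
    {a b : Fin d → ℝ} (ha : a ∈ cubeIcc d) (hb : b ∈ cubeIcc d) :
    ρ (clBox a b) = volume.restrict (cubeIco d) (F '' clBox a b) := by
  have hsub := clBox_subset ha hb
  have hm : MeasurableSet (F '' clBox a b) :=
    ((isCompact_clBox a b).image_of_continuousOn (hc.mono hsub)).measurableSet
  rw [← h.map_eq, Measure.map_apply h.measurable hm]
  refine measure_congr ?_
  have hae : ∀ᵐ x ∂ρ, x ∈ cubeIcc d :=
    (mem_ae_iff_prob_eq_one (isCompact_cubeIcc d).measurableSet).2 hρ
  filter_upwards [hae] with x hx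
  refine propext ⟨fun hxb => mem_image_of_mem F hxb, ?_⟩
  rintro ⟨y, hy, hyx⟩
  exact tri_injOn h (hsub hy) hx hyx ▸ hy

end Triangular

/-! ### Uniform continuity of the kernel on boxes -/

section Continuity

variable {d₁ d₂ : ℕ} {K : Kernel (Fin d₁ → ℝ) (Fin d₂ → ℝ)}
  {F : (Fin d₁ → ℝ) → (Fin d₂ → ℝ) → (Fin d₂ → ℝ)}

lemma holder_continuousOn (hFH : HolderJointly F) :
    ContinuousOn (Function.uncurry F) (cubeIcc d₁ ×ˢ cubeIcc d₂) := by
  obtain ⟨C, hC, κ, hκ, hH⟩ := hFH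
  rintro ⟨x, y⟩ ⟨hx, hy⟩
  rw [ContinuousWithinAt, tendsto_iff_norm_sub_tendsto_zero]
  have hlim : Tendsto (fun p : (Fin d₁ → ℝ) × (Fin d₂ → ℝ) =>
      C * (max ‖p.1 - x‖ ‖p.2 - y‖) ^ κ)
      (nhdsWithin (x, y) (cubeIcc d₁ ×ˢ cubeIcc d₂)) (nhds 0) := by
    have hcont : Continuous fun p : (Fin d₁ → ℝ) × (Fin d₂ → ℝ) =>
        C * (max ‖p.1 - x‖ ‖p.2 - y‖) ^ κ := by
      refine continuous_const.mul (Continuous.rpow_const (by fun_prop) fun _ => Or.inr hκ.1.le)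
    have := (hcont.tendsto (x, y)).mono_left
      (nhdsWithin_le_nhds (s := cubeIcc d₁ ×ˢ cubeIcc d₂))
    simpa [Real.zero_rpow hκ.1.ne'] using this
  refine squeeze_zero' (Eventually.of_forall fun _ => norm_nonneg _) ?_ hlim
  filter_upwards [self_mem_nhdsWithin] with p hp
  exact hH p.1 hp.1 x hx p.2 hp.2 y hy

/-- For fixed `u`, the solution `y` of `F x y = u` depends continuously on `x`: by compactness and
joint continuity every cluster point of solutions is a solution, and solutions are unique. -/
lemma tendsto_inverse (hF : IsTriangularKernel K F)
    (hFc : ContinuousOn (Function.uncurry F) (cubeIcc d₁ ×ˢ cubeIcc d₂))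
    {ι : Type*} {l : Filter ι} {ξ : ι → (Fin d₁ → ℝ)} {x : Fin d₁ → ℝ}
    (hξ : ∀ n, ξ n ∈ cubeIcc d₁) (hx : x ∈ cubeIcc d₁) (hlim : Tendsto ξ l (nhds x))
    {u : Fin d₂ → ℝ} {η : ι → (Fin d₂ → ℝ)} {y : Fin d₂ → ℝ}
    (hη : ∀ n, η n ∈ cubeIcc d₂) (hy : y ∈ cubeIcc d₂)
    (hηu : ∀ n, F (ξ n) (η n) = u) (hyu : F x y = u) : Tendsto η l (nhds y) := by
  refine (isCompact_cubeIcc d₂).tendsto_nhds_of_unique_mapClusterPt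
    (Eventually.of_forall hη) fun z hz hcl => ?_
  obtain ⟨U, hU, hUz⟩ := mapClusterPt_iff_ultrafilter.1 hcl
  have h1 : Tendsto (fun n => (ξ n, η n)) U
      (nhdsWithin (x, z) (cubeIcc d₁ ×ˢ cubeIcc d₂)) :=
    tendsto_nhdsWithin_iff.2 ⟨(hlim.mono_left hU).prodMk_nhds hUz,
      Eventually.of_forall fun n => ⟨hξ n, hη n⟩⟩
  have h2 := (hFc (x, z) ⟨hx, hz⟩).tendsto.comp h1
  have h3 : (Function.uncurry F ∘ fun n => (ξ n, η n)) = fun _ => u := funext hηu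
  rw [h3] at h2
  have h4 : F x z = u := tendsto_nhds_unique h2 tendsto_const_nhds
  exact tri_injOn (hF.tri x hx) hz hy (h4.trans hyu.symm)

/-- `(x, a, b) ↦ K(x, [a, b])` is jointly continuous on the compact cube. -/
lemma continuous_kernel_box [IsMarkovKernel K] (hKc : ∀ x ∈ cubeIcc d₁, K x (cubeIcc d₂) = 1)
    (hF : IsTriangularKernel K F)
    (hFc : ContinuousOn (Function.uncurry F) (cubeIcc d₁ ×ˢ cubeIcc d₂)) :
    Continuous fun p : cubeIcc d₁ × cubeIcc d₂ × cubeIcc d₂ =>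
      K p.1 (clBox (p.2.1 : Fin d₂ → ℝ) p.2.2) := by
  have hFx : ∀ x ∈ cubeIcc d₁, ContinuousOn (F x) (cubeIcc d₂) := fun x hx =>
    hFc.comp (f := fun y => (x, y)) (by fun_prop) fun y hy => ⟨hx, hy⟩
  have hcm : ∀ p : cubeIcc d₁ × cubeIcc d₂ × cubeIcc d₂,
      MeasurableSet (F p.1 '' clBox (p.2.1 : Fin d₂ → ℝ) p.2.2) := fun p =>
    ((isCompact_clBox _ _).image_of_continuousOn
      ((hFx _ p.1.2).mono (clBox_subset p.2.1.2 p.2.2.2))).measurableSet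
  have hcongr : (fun p : cubeIcc d₁ × cubeIcc d₂ × cubeIcc d₂ =>
      K p.1 (clBox (p.2.1 : Fin d₂ → ℝ) p.2.2)) = fun p =>
      volume.restrict (cubeIco d₂) (F p.1 '' clBox (p.2.1 : Fin d₂ → ℝ) p.2.2) :=
    funext fun p => tri_measure_clBox (hF.tri _ p.1.2) (hKc _ p.1.2) (hFx _ p.1.2)
      p.2.1.2 p.2.2.2
  have hfin : IsFiniteMeasure ((volume : Measure (Fin d₂ → ℝ)).restrict (cubeIco d₂)) :=
    ⟨by
      rw [Measure.restrict_apply_univ]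
      exact (measure_mono (cubeIco_subset d₂)).trans_lt (isCompact_cubeIcc d₂).measure_lt_top⟩
  rw [hcongr, continuous_iff_continuousAt]
  rintro ⟨x, a, b⟩
  refine tendsto_measure_of_ae_tendsto_indicator_of_isFiniteMeasure _ (hcm _) hcm ?_
  have hnull : ∀ i : Fin d₂, ∀ c : ℝ, ∀ᵐ u ∂volume.restrict (cubeIco d₂),
      u ∉ F x '' {y ∈ cubeIcc d₂ | y i = c} := fun i c =>
    ae_restrict_of_ae (measure_eq_zero_iff_ae_notMem.1 (tri_null (hF.tri _ x.2) (hFx _ x.2) i c))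
  filter_upwards [ae_restrict_mem (measurableSet_cubeIco d₂), ae_all_iff.2 fun i => hnull i (a.1 i),
    ae_all_iff.2 fun i => hnull i (b.1 i)] with u hu hua hub
  choose g hg hgu using fun x : cubeIcc d₁ => (hF.tri x x.2).bijOn.surjOn hu
  have hgc : ∀ x, g x ∈ cubeIcc d₂ := fun x => cubeIco_subset _ (hg x)
  have hmem : ∀ p : cubeIcc d₁ × cubeIcc d₂ × cubeIcc d₂,
      u ∈ F p.1 '' clBox (p.2.1 : Fin d₂ → ℝ) p.2.2 ↔
        ∀ i, (p.2.1 : Fin d₂ → ℝ) i ≤ g p.1 i ∧ g p.1 i ≤ (p.2.2 : Fin d₂ → ℝ) i := by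
    intro p
    rw [← mem_clBox]
    refine ⟨?_, fun h => ⟨_, h, hgu _⟩⟩
    rintro ⟨y, hy, hyu⟩
    have : y = g p.1 := tri_injOn (hF.tri _ p.1.2) (clBox_subset p.2.1.2 p.2.2.2 hy) (hgc _)
      (hyu.trans (hgu p.1).symm)
    exact this ▸ hy
  simp only [hmem]
  have hgt : Tendsto (fun p : cubeIcc d₁ × cubeIcc d₂ × cubeIcc d₂ => g p.1)
      (nhds (x, a, b)) (nhds (g x)) :=
    tendsto_inverse hF hFc (ξ := fun p => (p.1 : Fin d₁ → ℝ)) (fun p => p.1.2) x.2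
      ((continuous_subtype_val.comp continuous_fst).tendsto _) (fun p => hgc p.1) (hgc x)
      (fun p => hgu p.1) (hgu x)
  have hat : Tendsto (fun p : cubeIcc d₁ × cubeIcc d₂ × cubeIcc d₂ => (p.2.1 : Fin d₂ → ℝ))
      (nhds (x, a, b)) (nhds a) :=
    (by fun_prop : Continuous fun p : cubeIcc d₁ × cubeIcc d₂ × cubeIcc d₂ =>
      (p.2.1 : Fin d₂ → ℝ)).tendsto _
  have hbt : Tendsto (fun p : cubeIcc d₁ × cubeIcc d₂ × cubeIcc d₂ => (p.2.2 : Fin d₂ → ℝ))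
      (nhds (x, a, b)) (nhds b) :=
    (by fun_prop : Continuous fun p : cubeIcc d₁ × cubeIcc d₂ × cubeIcc d₂ =>
      (p.2.2 : Fin d₂ → ℝ)).tendsto _
  rw [tendsto_pi_nhds] at hgt hat hbt
  -- a strict inequality between limits, in either direction, persists nearby
  have hcmp : ∀ {φ ψ : cubeIcc d₁ × cubeIcc d₂ × cubeIcc d₂ → ℝ} {s t : ℝ}
      {l : Filter (cubeIcc d₁ × cubeIcc d₂ × cubeIcc d₂)},
      Tendsto φ l (nhds s) → Tendsto ψ l (nhds t) → s ≠ t →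
      ∀ᶠ p in l, (φ p ≤ ψ p ↔ s ≤ t) := by
    intro φ ψ s t l hφ hψ hst
    rcases hst.lt_or_gt with h | h
    · filter_upwards [hφ.eventually_lt hψ h] with p hp
      exact iff_of_true hp.le h.le
    · filter_upwards [hψ.eventually_lt hφ h] with p hp
      exact iff_of_false hp.not_ge h.not_ge
  have hev : ∀ᶠ p : cubeIcc d₁ × cubeIcc d₂ × cubeIcc d₂ in nhds (x, a, b), ∀ i,
      ((p.2.1 : Fin d₂ → ℝ) i ≤ g p.1 i ↔ a.1 i ≤ g x i) ∧
      (g p.1 i ≤ (p.2.2 : Fin d₂ → ℝ) i ↔ g x i ≤ b.1 i) := by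
    refine eventually_all.2 fun i => (hcmp (hat i) (hgt i) ?_).and (hcmp (hgt i) (hbt i) ?_)
    · exact fun h => hua i ⟨g x, ⟨hgc x, h.symm⟩, hgu x⟩
    · exact fun h => hub i ⟨g x, ⟨hgc x, h⟩, hgu x⟩
  filter_upwards [hev] with p hp
  rw [hmem (x, a, b)]
  exact forall_congr' fun i => and_congr (hp i).1 (hp i).2

/-- `x ↦ K(x, [a, b])` is uniformly continuous, with a modulus that does not depend on the box. -/
lemma kernel_box_equicontinuous [IsMarkovKernel K]
    (hKc : ∀ x ∈ cubeIcc d₁, K x (cubeIcc d₂) = 1)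
    (hF : IsTriangularKernel K F) (hFH : HolderJointly F) {ε : ℝ} (hε : 0 < ε) :
    ∃ δ > 0, ∀ x ∈ cubeIcc d₁, ∀ x' ∈ cubeIcc d₁, dist x x' < δ →
      ∀ a b : Fin d₂ → ℝ, IsGoodBox a b →
        |(K x).real (clBox a b) - (K x').real (clBox a b)| ≤ ε := by
  have hcont := continuous_kernel_box hKc hF (holder_continuousOn hFH)
  have hreal : Continuous fun p : cubeIcc d₁ × cubeIcc d₂ × cubeIcc d₂ =>
      (K p.1).real (clBox (p.2.1 : Fin d₂ → ℝ) p.2.2) :=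
    continuous_iff_continuousAt.2 fun p =>
      (ENNReal.tendsto_toReal (measure_ne_top _ _)).comp hcont.continuousAt
  have : CompactSpace (cubeIcc d₁) := isCompact_iff_compactSpace.1 (isCompact_cubeIcc d₁)
  have : CompactSpace (cubeIcc d₂) := isCompact_iff_compactSpace.1 (isCompact_cubeIcc d₂)
  obtain ⟨δ, hδ, h⟩ := Metric.uniformContinuous_iff.1
    (CompactSpace.uniformContinuous_of_continuous hreal) ε hε
  refine ⟨δ, hδ, fun x hx x' hx' hxx a b hab => ?_⟩
  have ha : a ∈ cubeIcc d₂ := mem_cubeIcc.2 fun i =>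
    ⟨(hab i).1, by linarith [(hab i).2.1, (hab i).2.2]⟩
  have hb : b ∈ cubeIcc d₂ := mem_cubeIcc.2 fun i =>
    ⟨by linarith [(hab i).1, (hab i).2.1], (hab i).2.2.le⟩
  have := @h (⟨x, hx⟩, ⟨a, ha⟩, ⟨b, hb⟩) (⟨x', hx'⟩, ⟨a, ha⟩, ⟨b, hb⟩)
    (by simpa [Prod.dist_eq, hδ, Subtype.dist_eq] using hxx)
  exact this.le

end Continuity

/-! ### The extreme norm on degenerate and half-open boxes -/

section Boxes

lemma extDist_nonneg {d : ℕ} (μ ν : Measure (Fin d → ℝ)) : 0 ≤ extDist μ ν :=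
  Real.iSup_nonneg fun _ => abs_nonneg _

variable {d : ℕ} (μ ν : Measure (Fin d → ℝ)) [IsProbabilityMeasure μ] [IsProbabilityMeasure ν]

lemma abs_real_sub_le_one {α : Type*} [MeasurableSpace α] (μ ν : Measure α)
    [IsProbabilityMeasure μ] [IsProbabilityMeasure ν] (s : Set α) :
    |μ.real s - ν.real s| ≤ 1 := by
  rw [abs_le]
  constructor <;> linarith [measureReal_nonneg (μ := μ) (s := s),
    measureReal_nonneg (μ := ν) (s := s), measureReal_le_one (μ := μ) (s := s),
    measureReal_le_one (μ := ν) (s := s)]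

lemma le_extDist_of_good {a b : Fin d → ℝ} (h : IsGoodBox a b) :
    |μ.real (clBox a b) - ν.real (clBox a b)| ≤ extDist μ ν := by
  refine le_ciSup (f := fun p : {q : (Fin d → ℝ) × (Fin d → ℝ) // IsGoodBox q.1 q.2} =>
    |(μ (clBox p.1.1 p.1.2)).toReal - (ν (clBox p.1.1 p.1.2)).toReal|) ⟨1, ?_⟩ ⟨(a, b), h⟩
  rintro _ ⟨p, rfl⟩
  exact abs_real_sub_le_one μ ν _

/-- The bound `|μ(B) - ν(B)| ≤ ‖μ - ν‖_E` passes to pointwise limits of sets. -/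
lemma le_extDist_of_tendsto {s : Set (Fin d → ℝ)} {t : ℕ → Set (Fin d → ℝ)}
    (hs : MeasurableSet s) (ht : ∀ n, MeasurableSet (t n))
    (hlim : ∀ x, ∀ᶠ n in atTop, x ∈ t n ↔ x ∈ s)
    (hle : ∀ᶠ n in atTop, |μ.real (t n) - ν.real (t n)| ≤ extDist μ ν) :
    |μ.real s - ν.real s| ≤ extDist μ ν := by
  have key : ∀ (ρ : Measure (Fin d → ℝ)) [IsProbabilityMeasure ρ],
      Tendsto (fun n => ρ.real (t n)) atTop (nhds (ρ.real s)) := fun ρ _ =>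
    (ENNReal.tendsto_toReal (measure_ne_top _ _)).comp
      (tendsto_measure_of_ae_tendsto_indicator_of_isFiniteMeasure _ hs ht
        (Eventually.of_forall hlim))
  exact le_of_tendsto ((key μ).sub (key ν)).abs hle

/-- Degenerate boxes `aᵢ ≤ bᵢ` are decreasing limits of admissible ones. -/
lemma le_extDist_of_le {a b : Fin d → ℝ} (h : ∀ i, 0 ≤ a i ∧ a i ≤ b i ∧ b i < 1) :
    |μ.real (clBox a b) - ν.real (clBox a b)| ≤ extDist μ ν := by
  have hz := tendsto_one_div_add_atTop_nhds_zero_nat (𝕜 := ℝ)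
  have hpos : ∀ n : ℕ, (0 : ℝ) < 1 / ((n : ℝ) + 1) := fun n => by positivity
  refine le_extDist_of_tendsto μ ν (t := fun n => clBox a fun i => b i + 1 / ((n : ℝ) + 1))
    (isCompact_clBox _ _).measurableSet (fun n => (isCompact_clBox _ _).measurableSet) ?_ ?_
  · intro x
    simp only [mem_clBox]
    have : ∀ᶠ n : ℕ in atTop, ∀ i, b i < x i → 1 / ((n : ℝ) + 1) < x i - b i := by
      refine eventually_all.2 fun i => ?_
      by_cases hi : b i < x i
      · filter_upwards [hz.eventually_lt_const (sub_pos.2 hi)] with n hn _ using hn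
      · exact Eventually.of_forall fun n hn => absurd hn hi
    filter_upwards [this] with n hn
    refine forall_congr' fun i => and_congr_right fun _ => ⟨fun h => ?_, fun h => ?_⟩
    · by_contra! hlt
      linarith [hn i hlt]
    · linarith [hpos n]
  · have : ∀ᶠ n : ℕ in atTop, ∀ i, 1 / ((n : ℝ) + 1) < 1 - b i :=
      eventually_all.2 fun i => hz.eventually_lt_const (sub_pos.2 (h i).2.2)
    filter_upwards [this] with n hn
    refine le_extDist_of_good μ ν fun i => ⟨(h i).1, ?_, ?_⟩
    · linarith [hpos n, (h i).2.1]
    · linarith [hn i]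

/-- The half-open cell `∏ᵢ [αᵢ, βᵢ)`. -/
def cell (α β : Fin d → ℝ) : Set (Fin d → ℝ) := Set.univ.pi fun i => Set.Ico (α i) (β i)

lemma mem_cell {d : ℕ} {α β x : Fin d → ℝ} :
    x ∈ cell α β ↔ ∀ i, α i ≤ x i ∧ x i < β i := by
  simp [cell]

lemma measurableSet_cell {d : ℕ} (α β : Fin d → ℝ) : MeasurableSet (cell α β) :=
  MeasurableSet.univ_pi fun _ => measurableSet_Ico

/-- Intersections of a closed box with a half-open cell are increasing limits of closed boxes. -/
lemma le_extDist_inter_cell {a b : Fin d → ℝ} (h : IsGoodBox a b) (α β : Fin d → ℝ) :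
    |μ.real (clBox a b ∩ cell α β) - ν.real (clBox a b ∩ cell α β)| ≤ extDist μ ν := by
  have hz := tendsto_one_div_add_atTop_nhds_zero_nat (𝕜 := ℝ)
  have hpos : ∀ n : ℕ, (0 : ℝ) < 1 / ((n : ℝ) + 1) := fun n => by positivity
  refine le_extDist_of_tendsto μ ν
    (t := fun n => clBox (a ⊔ α) (b ⊓ fun i => β i - 1 / ((n : ℝ) + 1)))
    ((isCompact_clBox _ _).measurableSet.inter (measurableSet_cell _ _))
    (fun n => (isCompact_clBox _ _).measurableSet) ?_ ?_
  · intro x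
    simp only [mem_inter_iff, mem_clBox, mem_cell, Pi.sup_apply, Pi.inf_apply, sup_le_iff,
      le_inf_iff, ← forall_and]
    have : ∀ᶠ n : ℕ in atTop, ∀ i, x i < β i → 1 / ((n : ℝ) + 1) < β i - x i := by
      refine eventually_all.2 fun i => ?_
      by_cases hi : x i < β i
      · filter_upwards [hz.eventually_lt_const (sub_pos.2 hi)] with n hn _ using hn
      · exact Eventually.of_forall fun n hn => absurd hn hi
    filter_upwards [this] with n hn
    refine forall_congr' fun i => ⟨fun h => ?_, fun h => ?_⟩
    · exact ⟨⟨h.1.1, h.2.1⟩, h.1.2, by linarith [hpos n, h.2.2]⟩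
    · exact ⟨⟨h.1.1, h.2.1⟩, h.1.2, by linarith [hn i h.2.2]⟩
  · refine Eventually.of_forall fun n => ?_
    by_cases hne : ∀ i, (a ⊔ α) i ≤ (b ⊓ fun i => β i - 1 / ((n : ℝ) + 1)) i
    · exact le_extDist_of_le μ ν fun i => ⟨(h i).1.trans le_sup_left, hne i,
        inf_le_left.trans_lt (h i).2.2⟩
    · have : clBox (a ⊔ α) (b ⊓ fun i => β i - 1 / ((n : ℝ) + 1)) = ∅ := by
        refine eq_empty_of_forall_notMem fun x hx => hne fun i => ?_
        exact (mem_clBox.1 hx i).1.trans (mem_clBox.1 hx i).2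
      simp only [this, measureReal_empty, sub_self, abs_zero]
      exact extDist_nonneg μ ν

end Boxes

/-! ### Step-function approximation on a grid -/

/-- Replacing `f` on `A ∩ C k` by the constant `c k` costs at most `ε` in the integral. -/
lemma abs_setIntegral_sub_sum_le {α ι : Type*} [MeasurableSpace α] [Fintype ι]
    (μ : Measure α) [IsProbabilityMeasure μ] {A : Set α} (hA : MeasurableSet A)
    {C : ι → Set α} (hC : ∀ k, MeasurableSet (C k)) (hdisj : Pairwise (Function.onFun Disjoint C))
    (hcov : A ⊆ ⋃ k, C k) {f : α → ℝ} (hf : Integrable f μ) {c : ι → ℝ} {ε : ℝ} (hε : 0 ≤ ε)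
    (hfc : ∀ k, ∀ x ∈ A ∩ C k, |f x - c k| ≤ ε) :
    |∫ x in A, f x ∂μ - ∑ k, c k * μ.real (A ∩ C k)| ≤ ε := by
  have hmeas : ∀ k, MeasurableSet (A ∩ C k) := fun k => hA.inter (hC k)
  have hdisj' : Pairwise (Function.onFun Disjoint fun k => A ∩ C k) := fun i j hij =>
    (hdisj hij).mono inter_subset_right inter_subset_right
  have hAU : A = ⋃ k, A ∩ C k := by rw [← inter_iUnion, inter_eq_left.2 hcov]
  have h1 : ∫ x in A, f x ∂μ = ∑ k, ∫ x in A ∩ C k, f x ∂μ := by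
    conv_lhs => rw [hAU]
    exact integral_iUnion_fintype hmeas hdisj' fun k => hf.integrableOn
  have h2 : ∑ k, μ.real (A ∩ C k) ≤ 1 := by
    rw [← measureReal_iUnion_fintype hdisj' hmeas]
    exact measureReal_le_one
  have h3 : ∀ k, |∫ x in A ∩ C k, f x ∂μ - c k * μ.real (A ∩ C k)| ≤ ε * μ.real (A ∩ C k) := by
    intro k
    have : ∫ x in A ∩ C k, f x ∂μ - c k * μ.real (A ∩ C k) = ∫ x in A ∩ C k, (f x - c k) ∂μ := by
      rw [integral_sub hf.integrableOn (integrable_const _), setIntegral_const, smul_eq_mul,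
        mul_comm]
    rw [this, ← Real.norm_eq_abs]
    exact norm_setIntegral_le_of_norm_le_const (measure_lt_top _ _) fun x hx => hfc k x hx
  rw [h1, ← Finset.sum_sub_distrib]
  calc _ ≤ ∑ k, |∫ x in A ∩ C k, f x ∂μ - c k * μ.real (A ∩ C k)| := Finset.abs_sum_le_sum_abs _ _
    _ ≤ ∑ k, ε * μ.real (A ∩ C k) := Finset.sum_le_sum fun k _ => h3 k
    _ = ε * ∑ k, μ.real (A ∩ C k) := by rw [Finset.mul_sum]
    _ ≤ ε := mul_le_of_le_one_right hε h2

/-- Lower corner of the grid cell with index `k` and mesh `1/n`. -/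
def corner {d n : ℕ} (k : Fin d → Fin n) : Fin d → ℝ := fun i => (k i : ℝ) / n

/-- The grid cell with index `k` and mesh `1/n`; these cells partition `[0,1)^d`. -/
def gridCell {d n : ℕ} (k : Fin d → Fin n) : Set (Fin d → ℝ) :=
  cell (corner k) fun i => ((k i : ℝ) + 1) / n

lemma mem_gridCell {d n : ℕ} (hn : 0 < n) {k : Fin d → Fin n} {x : Fin d → ℝ} :
    x ∈ gridCell k ↔ ∀ i, (k i : ℝ) ≤ n * x i ∧ n * x i < (k i : ℝ) + 1 := by
  have : (0 : ℝ) < n := by exact_mod_cast hn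
  simp only [gridCell, mem_cell, corner, div_le_iff₀ this, lt_div_iff₀ this, mul_comm]

lemma pairwise_disjoint_gridCell {d n : ℕ} (hn : 0 < n) :
    Pairwise (Function.onFun Disjoint (gridCell : (Fin d → Fin n) → Set (Fin d → ℝ))) := by
  intro k k' hkk
  refine Set.disjoint_left.2 fun x hx hx' => hkk (funext fun i => Fin.ext ?_)
  have h1 := (mem_gridCell hn).1 hx i
  have h2 := (mem_gridCell hn).1 hx' i
  have h3 : ((k i : ℕ) : ℝ) < (k' i : ℕ) + 1 := h1.1.trans_lt h2.2
  have h4 : ((k' i : ℕ) : ℝ) < (k i : ℕ) + 1 := h2.1.trans_lt h1.2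
  norm_cast at h3 h4
  omega

lemma cubeIco_subset_iUnion_gridCell {d n : ℕ} (hn : 0 < n) :
    cubeIco d ⊆ ⋃ k : Fin d → Fin n, gridCell k := by
  intro x hx
  have hn' : (0 : ℝ) < n := by exact_mod_cast hn
  have hx := mem_cubeIco.1 hx
  refine mem_iUnion.2 ⟨fun i => ⟨⌊n * x i⌋₊, ?_⟩, (mem_gridCell hn).2 fun i => ⟨?_, ?_⟩⟩
  · rw [Nat.floor_lt (mul_nonneg hn'.le (hx i).1)]
    exact mul_lt_of_lt_one_right hn' (hx i).2
  · exact Nat.floor_le (mul_nonneg hn'.le (hx i).1)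
  · exact Nat.lt_floor_add_one _

lemma corner_mem_cubeIcc {d n : ℕ} (k : Fin d → Fin n) : corner k ∈ cubeIcc d := by
  refine mem_cubeIcc.2 fun i => ⟨by unfold corner; positivity, ?_⟩
  exact div_le_one_of_le₀ (by exact_mod_cast (k i).2.le) (Nat.cast_nonneg n)

lemma dist_corner_le {d n : ℕ} (hn : 0 < n) {k : Fin d → Fin n} {x : Fin d → ℝ}
    (hx : x ∈ gridCell k) : dist x (corner k) ≤ 1 / n := by
  refine (dist_pi_le_iff (by positivity)).2 fun i => ?_
  have h := mem_cell.1 hx i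
  rw [add_div] at h
  rw [Real.dist_eq, abs_of_nonneg (sub_nonneg.2 h.1)]
  unfold corner at *
  linarith [h.2]

/-! ### Estimate for the product measures -/

lemma compProd_box {d₁ d₂ : ℕ} (μ : Measure (Fin d₁ → ℝ)) [IsProbabilityMeasure μ]
    (K : Kernel (Fin d₁ → ℝ) (Fin d₂ → ℝ)) [IsMarkovKernel K] {s : Set (Fin d₁ → ℝ)}
    {t : Set (Fin d₂ → ℝ)} (hs : MeasurableSet s) (ht : MeasurableSet t) :
    ((μ.compProd K) (s ×ˢ t)).toReal = ∫ x in s, (K x).real t ∂μ := by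
  rw [Measure.compProd_apply_prod hs ht]
  exact (integral_toReal (K.measurable_coe ht).aemeasurable
    (Eventually.of_forall fun x => measure_lt_top _ _)).symm

/-- If `x ↦ K(x, B)` oscillates by at most `ε` on each grid cell, uniformly in the box `B`, then
the extreme distance of the products is at most `2ε` plus the number of cells times the extreme
distance of the first marginals. -/
lemma extDistProd_le {d₁ d₂ : ℕ} (μ ν : Measure (Fin d₁ → ℝ)) [IsProbabilityMeasure μ]
    [IsProbabilityMeasure ν] (K : Kernel (Fin d₁ → ℝ) (Fin d₂ → ℝ)) [IsMarkovKernel K]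
    {n : ℕ} (hn : 0 < n) {ε : ℝ} (hε : 0 ≤ ε)
    (hK : ∀ k : Fin d₁ → Fin n, ∀ x ∈ cubeIcc d₁ ∩ gridCell k, ∀ a b : Fin d₂ → ℝ, IsGoodBox a b →
      |(K x).real (clBox a b) - (K (corner k)).real (clBox a b)| ≤ ε) :
    extDistProd (μ.compProd K) (ν.compProd K) ≤
      2 * ε + Fintype.card (Fin d₁ → Fin n) * extDist μ ν := by
  have hD := extDist_nonneg μ ν
  refine Real.iSup_le ?_ (by positivity)
  rintro ⟨⟨⟨a, b⟩, ⟨a', b'⟩⟩, hab, hab'⟩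
  have hA : MeasurableSet (clBox a b) := (isCompact_clBox a b).measurableSet
  have hB : MeasurableSet (clBox a' b') := (isCompact_clBox a' b').measurableSet
  simp only at hab hab' ⊢
  rw [compProd_box μ K hA hB, compProd_box ν K hA hB]
  have hsub : clBox a b ⊆ cubeIco d₁ := fun x hx => mem_cubeIco.2 fun i =>
    ⟨(hab i).1.trans (mem_clBox.1 hx i).1, (mem_clBox.1 hx i).2.trans_lt (hab i).2.2⟩
  have hint : ∀ (ρ : Measure (Fin d₁ → ℝ)) [IsProbabilityMeasure ρ],
      Integrable (fun x => (K x).real (clBox a' b')) ρ := fun ρ _ =>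
    Integrable.of_bound (K.measurable_coe hB).ennreal_toReal.aestronglyMeasurable 1
      (Eventually.of_forall fun x => by
        rw [Real.norm_of_nonneg measureReal_nonneg]; exact measureReal_le_one)
  have happrox : ∀ (ρ : Measure (Fin d₁ → ℝ)) [IsProbabilityMeasure ρ],
      |∫ x in clBox a b, (K x).real (clBox a' b') ∂ρ -
        ∑ k : Fin d₁ → Fin n, (K (corner k)).real (clBox a' b') *
          ρ.real (clBox a b ∩ gridCell k)| ≤ ε := fun ρ _ =>
    abs_setIntegral_sub_sum_le ρ hA (fun k => measurableSet_cell _ _)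
      (pairwise_disjoint_gridCell hn) (hsub.trans (cubeIco_subset_iUnion_gridCell hn)) (hint ρ) hε
      fun k x hx => hK k x ⟨cubeIco_subset _ (hsub hx.1), hx.2⟩ a' b' hab'
  have hsum : |∑ k : Fin d₁ → Fin n, (K (corner k)).real (clBox a' b') *
        μ.real (clBox a b ∩ gridCell k) -
      ∑ k : Fin d₁ → Fin n, (K (corner k)).real (clBox a' b') *
        ν.real (clBox a b ∩ gridCell k)| ≤ Fintype.card (Fin d₁ → Fin n) * extDist μ ν := by
    rw [← Finset.sum_sub_distrib]
    refine (Finset.abs_sum_le_sum_abs _ _).trans ?_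
    rw [← Finset.card_univ, ← nsmul_eq_mul]
    refine Finset.sum_le_card_nsmul _ _ _ fun k _ => ?_
    rw [← mul_sub, abs_mul, abs_of_nonneg measureReal_nonneg]
    exact (mul_le_of_le_one_left (abs_nonneg _) measureReal_le_one).trans
      (le_extDist_inter_cell μ ν hab _ _)
  have h1 := happrox μ
  have h2 := happrox ν
  rw [abs_le] at h1 h2 hsum ⊢
  constructor <;> linarith [h1.1, h1.2, h2.1, h2.2, hsum.1, hsum.2]

end ExtremeNorm

/-- Lemma 1 of the paper: if `π^N → π` in extreme norm, `π` is absolutely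
continuous, and the Markov kernel `K` admits a jointly Hölder continuous triangular
transform, then `π^N ⊗ K → π ⊗ K` in extreme norm on `[0,1]^{d₁+d₂}`. -/
theorem extDistProd_compProd_tendsto
    {d₁ d₂ : ℕ} (hd₁ : 1 ≤ d₁) (hd₂ : 1 ≤ d₂)
    (πseq : ℕ → Measure (Fin d₁ → ℝ)) (π : Measure (Fin d₁ → ℝ))
    [∀ N, IsProbabilityMeasure (πseq N)] [IsProbabilityMeasure π]
    (hseqc : ∀ N, πseq N (cubeIcc d₁) = 1) (hπc : π (cubeIcc d₁) = 1)
    (hconv : Tendsto (fun N => extDist (πseq N) π) atTop (nhds 0))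
    (hac : π ≪ (volume : Measure (Fin d₁ → ℝ)))
    (K : Kernel (Fin d₁ → ℝ) (Fin d₂ → ℝ)) [IsMarkovKernel K]
    (hKc : ∀ x ∈ cubeIcc d₁, K x (cubeIcc d₂) = 1)
    (F : (Fin d₁ → ℝ) → (Fin d₂ → ℝ) → (Fin d₂ → ℝ))
    (hF : IsTriangularKernel K F) (hFH : HolderJointly F) :
    Tendsto (fun N => extDistProd ((πseq N).compProd K) (π.compProd K))
      atTop (nhds 0) := by
  have hext : ∀ N, 0 ≤ extDistProd ((πseq N).compProd K) (π.compProd K) := fun N =>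
    Real.iSup_nonneg fun _ => abs_nonneg _
  rw [Metric.tendsto_atTop]
  intro ε hε
  obtain ⟨δ, hδ, hK⟩ :=
    ExtremeNorm.kernel_box_equicontinuous hKc hF hFH (show (0 : ℝ) < ε / 4 by positivity)
  obtain ⟨m, hm⟩ := exists_nat_one_div_lt hδ
  have hn : 0 < m + 1 := m.succ_pos
  have hbound := fun N => ExtremeNorm.extDistProd_le (πseq N) π K hn
    (show (0 : ℝ) ≤ ε / 4 by positivity) fun k x hx => hK x hx.1 _
      (ExtremeNorm.corner_mem_cubeIcc k)
      ((ExtremeNorm.dist_corner_le hn hx.2).trans_lt (by exact_mod_cast hm))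
  have hlim := hconv.const_mul (Fintype.card (Fin d₁ → Fin (m + 1)) : ℝ)
  rw [mul_zero] at hlim
  obtain ⟨N₀, hN₀⟩ := eventually_atTop.1
    (hlim.eventually_lt_const (show (0 : ℝ) < ε / 2 by positivity))
  refine ⟨N₀, fun N hN => ?_⟩
  rw [Real.dist_eq, sub_zero, abs_of_nonneg (hext N)]
  linarith [hbound N, hN₀ N hN]
end
end

section
/- Let d ≥ 1 and let (μ^N)_{N≥1}, μ be probability measures on [0,1]^d with ‖μ^N − μ‖_E → 0 as N → ∞, where μ is absolutely continuous with respect to Lebesgue measure. Let (K^N)_{N≥1} and K be Markov kernels from [0,1]^d to probability measures on [0,1]^d such that sup_{x∈[0,1]^d} ‖K^N(x,·) − K(x,·)‖_E → 0 as N → ∞, and such that K admits a triangular transform F_K(x, y) which, viewed jointly as a function of (x, y) ∈ [0,1]^{2d}, is Hölder continuous. Then ‖μ^N ⊗ K^N − μ ⊗ K‖_E → 0 as N → ∞, where μ ⊗ K denotes the probability measure μ(dx) K(x, dy) on [0,1]^{2d}. -/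
/-!
Write `B × B'` for a box of the product cube, so that `(μ ⊗ K)(B × B') = ∫_B K(x, B') μ(dx)`.
The difference with `(μ^N ⊗ K^N)(B × B')` splits into two terms.

* `∫_B (K^N - K)(x, B') μ^N(dx)` is at most the uniform distance between the kernels.
* `∫_B K(x, B') (μ^N - μ)(dx)` is small uniformly in `B, B'` because the functions `K(·, B')`
  are uniformly equicontinuous (`kernel_equicontinuous`). Up to the modulus of continuity they
  are constant on the cells of a fixed finite grid, and `μ^N - μ` charges each cell cut by `B` by
  at most `‖μ^N - μ‖_E` (`abs_clBox_inter_sub_le`, by approximation with closed boxes).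

For the equicontinuity, `K(x, [a, b])` is the Lebesgue measure of the image of `[a, b]` under
`F x`. A triangular map is injective on the closed cube, so by compactness the inverses of the
`F x` depend continuously on `x`; hence, as `(x, a, b)` varies, the indicator of `F x [a, b]`
converges off the images of the bounding hyperplanes. These images are null since triangularity
makes them graphs over the remaining coordinates. Dominated convergence shows that
`(x, a, b) ↦ K(x, [a, b])` extends to a continuous, hence uniformly continuous, function on a
compact set.
-/

open MeasureTheory ProbabilityTheory Filter Set
open scoped ENNReal NNReal

noncomputable section

/-! ### Injectivity of triangular transforms -/

lemma cubeIco_subset_cubeIcc (d : ℕ) : cubeIco d ⊆ cubeIcc d :=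
  Set.pi_mono fun _ _ => Set.Ico_subset_Icc_self

lemma isCompact_cubeIcc (d : ℕ) : IsCompact (cubeIcc d) :=
  isCompact_univ_pi fun _ => isCompact_Icc

lemma measurableSet_cubeIcc (d : ℕ) : MeasurableSet (cubeIcc d) :=
  (isCompact_cubeIcc d).measurableSet

lemma measurableSet_cubeIco (d : ℕ) : MeasurableSet (cubeIco d) :=
  MeasurableSet.univ_pi fun _ => measurableSet_Ico

lemma measurableSet_clBox {d : ℕ} (a b : Fin d → ℝ) : MeasurableSet (clBox a b) :=
  MeasurableSet.univ_pi fun _ => measurableSet_Icc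

lemma clBox_subset_cubeIco {d : ℕ} {a b : Fin d → ℝ} (h : IsGoodBox a b) :
    clBox a b ⊆ cubeIco d := by
  intro y hy i hi
  exact ⟨(h i).1.trans (hy i hi).1, (hy i hi).2.trans_lt (h i).2.2⟩

/-- If two points of the cube agree below `i`, then the `i`-th component of a triangular
transform separates their `i`-th coordinates. -/
lemma IsTriangular.coord_eq {d : ℕ} {π : Measure (Fin d → ℝ)} {F : (Fin d → ℝ) → (Fin d → ℝ)}
    (h : IsTriangular π F) {y z : Fin d → ℝ} (hy : y ∈ cubeIcc d) (hz : z ∈ cubeIcc d)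
    (i : Fin d) (hlt : ∀ j < i, y j = z j) (hF : F y i = F z i) : y i = z i := by
  refine (h.strictMono i y hy).injOn (hy i trivial) (hz i trivial) ?_
  have h1 : F (Function.update y i (z i)) i = F z i := by
    refine h.dep i _ _ fun j hj => ?_
    rcases hj.eq_or_lt with rfl | hj
    · simp
    · simp [hj.ne, hlt j hj]
  simpa [h1] using hF

lemma IsTriangular.eq_below {d : ℕ} {π : Measure (Fin d → ℝ)} {F : (Fin d → ℝ) → (Fin d → ℝ)}
    (h : IsTriangular π F) {y z : Fin d → ℝ} (hy : y ∈ cubeIcc d) (hz : z ∈ cubeIcc d)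
    (i : Fin d) (hF : ∀ j < i, F y j = F z j) : ∀ j < i, y j = z j := by
  intro j
  induction j using WellFoundedLT.induction with
  | ind j ih =>
    intro hj
    exact h.coord_eq hy hz j (fun k hk => ih k hk (hk.trans hj)) (hF j hj)

lemma IsTriangular.injOn {d : ℕ} {π : Measure (Fin d → ℝ)} {F : (Fin d → ℝ) → (Fin d → ℝ)}
    (h : IsTriangular π F) : InjOn F (cubeIcc d) := by
  intro y hy z hz hyz
  ext i
  exact h.coord_eq hy hz i (h.eq_below hy hz i fun j _ => by rw [hyz]) (by rw [hyz])

/-! ### Masses of boxes as volumes of images -/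

/-- The image under `F` of the part of the box `∏ᵢ [aᵢ, bᵢ]` in the half-open cube; no order
between `a` and `b` is required. -/
def boxImage {d : ℕ} (F : (Fin d → ℝ) → (Fin d → ℝ)) (a b : Fin d → ℝ) : Set (Fin d → ℝ) :=
  F '' (cubeIco d ∩ clBox a b)

lemma IsTriangular.measurableSet_image {d : ℕ} {π : Measure (Fin d → ℝ)}
    {F : (Fin d → ℝ) → (Fin d → ℝ)} (h : IsTriangular π F) {s : Set (Fin d → ℝ)}
    (hs : MeasurableSet s) : MeasurableSet (F '' (cubeIco d ∩ s)) :=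
  ((measurableSet_cubeIco d).inter hs).image_of_measurable_injOn h.measurable
    (h.injOn.mono (inter_subset_left.trans (cubeIco_subset_cubeIcc d)))

lemma IsTriangular.measure_clBox {d : ℕ} {π : Measure (Fin d → ℝ)} [IsProbabilityMeasure π]
    {F : (Fin d → ℝ) → (Fin d → ℝ)} (h : IsTriangular π F) (hc : π (cubeIcc d) = 1)
    {a b : Fin d → ℝ} (hab : IsGoodBox a b) : π (clBox a b) = volume (boxImage F a b) := by
  have hm : MeasurableSet (boxImage F a b) := h.measurableSet_image (measurableSet_clBox a b)
  have hsub : boxImage F a b ⊆ cubeIco d := by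
    rintro _ ⟨y, hy, rfl⟩
    exact h.bijOn.mapsTo hy.1
  have hae : ∀ᵐ y ∂π, y ∈ cubeIcc d :=
    (prob_compl_eq_zero_iff (measurableSet_cubeIcc d)).2 hc
  calc π (clBox a b) = π (F ⁻¹' boxImage F a b) := by
        refine measure_congr ?_
        filter_upwards [hae] with y hy
        refine propext ⟨fun hyb => ⟨y, ⟨clBox_subset_cubeIco hab hyb, hyb⟩, rfl⟩, ?_⟩
        rintro ⟨z, hz, hzy⟩
        have : z = y := h.injOn (cubeIco_subset_cubeIcc d hz.1) hy hzy
        exact this ▸ hz.2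
    _ = volume (boxImage F a b) := by
        rw [← Measure.map_apply h.measurable hm, h.map_eq, Measure.restrict_apply hm,
          inter_eq_self_of_subset_left hsub]

/-- The image of a hyperplane `yᵢ = c` is Lebesgue null: it meets each line parallel to the
`i`-th axis in at most one point, hence it has infinitely many disjoint translates along that
axis. -/
lemma IsTriangular.volume_hyperplane {d : ℕ} {π : Measure (Fin d → ℝ)}
    {F : (Fin d → ℝ) → (Fin d → ℝ)} (h : IsTriangular π F) (i : Fin d) (c : ℝ) :
    volume (F '' (cubeIco d ∩ {y | y i = c})) = 0 := by
  refine Measure.addHaar_eq_zero_of_disjoint_translates volume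
    (fun n : ℕ => Pi.single i (1 / ((n : ℝ) + 1))) ?_ ?_
    (h.measurableSet_image (measurableSet_eq_fun (measurable_pi_apply i) measurable_const))
  · refine (Metric.isBounded_closedBall (x := (0 : Fin d → ℝ)) (r := 1)).subset ?_
    rintro _ ⟨n, rfl⟩
    rw [mem_closedBall_zero_iff, Pi.norm_single, Real.norm_of_nonneg (by positivity)]
    exact Nat.one_div_le_one_div (Nat.zero_le n) |>.trans (by simp)
  · intro m n hmn
    rw [Function.onFun, Set.disjoint_left]
    rintro u hu hu'
    simp only [Set.singleton_add, Set.image_add_left, Set.mem_preimage] at hu hu'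
    obtain ⟨y, hy, hyu⟩ := hu
    obtain ⟨z, hz, hzu⟩ := hu'
    have hyI := cubeIco_subset_cubeIcc d hy.1
    have hzI := cubeIco_subset_cubeIcc d hz.1
    have hlt : ∀ j < i, y j = z j := h.eq_below hyI hzI i fun j hj => by
      rw [hyu, hzu]; simp [hj.ne]
    have hi : F y i = F z i := h.dep i y z fun j hj => by
      rcases hj.eq_or_lt with rfl | hj
      · exact hy.2.trans hz.2.symm
      · exact hlt j hj
    rw [hyu, hzu] at hi
    simp only [Pi.add_apply, Pi.neg_apply, Pi.single_eq_same, add_left_inj, neg_inj,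
      one_div, inv_inj, Nat.cast_inj] at hi
    exact hmn hi

/-! ### Equicontinuity of the kernel on boxes -/

lemma HolderJointly.continuousOn {d₁ d₂ : ℕ} {F : (Fin d₁ → ℝ) → (Fin d₂ → ℝ) → (Fin d₂ → ℝ)}
    (h : HolderJointly F) : ContinuousOn (Function.uncurry F) (cubeIcc d₁ ×ˢ cubeIcc d₂) := by
  obtain ⟨C, hC, κ, hκ, h⟩ := h
  rintro ⟨x, y⟩ ⟨hx, hy⟩
  rw [ContinuousWithinAt, tendsto_iff_dist_tendsto_zero]
  have h0 : Tendsto (fun p : (Fin d₁ → ℝ) × (Fin d₂ → ℝ) => C * (dist p (x, y)) ^ κ)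
      (nhdsWithin (x, y) (cubeIcc d₁ ×ˢ cubeIcc d₂)) (nhds 0) := by
    have hc : Continuous fun p : (Fin d₁ → ℝ) × (Fin d₂ → ℝ) => C * (dist p (x, y)) ^ κ :=
      continuous_const.mul
        ((continuous_id.dist continuous_const).rpow_const fun _ => Or.inr hκ.1.le)
    have := (hc.tendsto (x, y)).mono_left (nhdsWithin_le_nhds (s := cubeIcc d₁ ×ˢ cubeIcc d₂))
    simpa [Real.zero_rpow hκ.1.ne'] using this
  refine squeeze_zero' (Eventually.of_forall fun _ => dist_nonneg) ?_ h0
  filter_upwards [self_mem_nhdsWithin] with p hp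
  rw [Prod.dist_eq, dist_eq_norm, dist_eq_norm, dist_eq_norm]
  exact h p.1 hp.1 x hx p.2 hp.2 y hy

/-- The inverses of a jointly continuous family of injective maps of the cube converge
pointwise, by compactness of the cube. -/
lemma tendsto_inverse {d₁ d₂ : ℕ} {F : (Fin d₁ → ℝ) → (Fin d₂ → ℝ) → (Fin d₂ → ℝ)}
    (hFc : ContinuousOn (Function.uncurry F) (cubeIcc d₁ ×ˢ cubeIcc d₂))
    {P : Type*} [TopologicalSpace P] {X : P → Fin d₁ → ℝ} (hX : Continuous X)
    (hXc : ∀ p, X p ∈ cubeIcc d₁) {p₀ : P} (hinj : InjOn (F (X p₀)) (cubeIcc d₂))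
    {u : Fin d₂ → ℝ} {G : P → Fin d₂ → ℝ} (hGc : ∀ p, G p ∈ cubeIcc d₂)
    (hG : ∀ p, F (X p) (G p) = u) : Tendsto G (nhds p₀) (nhds (G p₀)) := by
  refine (isCompact_cubeIcc d₂).tendsto_nhds_of_unique_mapClusterPt
    (Eventually.of_forall hGc) fun y hy hcl => hinj hy (hGc p₀) ?_
  rw [hG p₀]
  obtain ⟨U, hU, hUy⟩ := mapClusterPt_iff_ultrafilter.1 hcl
  have h1 : Tendsto (fun p => (X p, G p)) U
      (nhdsWithin (X p₀, y) (cubeIcc d₁ ×ˢ cubeIcc d₂)) := by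
    refine tendsto_nhdsWithin_iff.2 ⟨?_, Eventually.of_forall fun p => ⟨hXc p, hGc p⟩⟩
    exact ((hX.tendsto p₀).mono_left hU).prodMk_nhds hUy
  have h2 := (hFc (X p₀, y) ⟨hXc p₀, hy⟩).tendsto.comp h1
  have h3 : (Function.uncurry F ∘ fun p => (X p, G p)) = fun _ => u := funext hG
  rw [h3] at h2
  exact tendsto_nhds_unique h2 tendsto_const_nhds

/-- Off the images of the bounding hyperplanes, which are null, membership in `boxImage` is
locally constant in the parameters, so its volume is continuous. -/
lemma continuous_volume_boxImage {d : ℕ}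
    {K : Kernel (Fin d → ℝ) (Fin d → ℝ)} {F : (Fin d → ℝ) → (Fin d → ℝ) → (Fin d → ℝ)}
    (hF : IsTriangularKernel K F)
    (hFc : ContinuousOn (Function.uncurry F) (cubeIcc d ×ˢ cubeIcc d))
    {P : Type*} [TopologicalSpace P] [FirstCountableTopology P] {X A B : P → Fin d → ℝ}
    (hX : Continuous X) (hA : Continuous A) (hB : Continuous B)
    (hXc : ∀ p, X p ∈ cubeIcc d) :
    Continuous fun p => volume (boxImage (F (X p)) (A p) (B p)) := by
  refine continuous_iff_continuousAt.2 fun p₀ => ?_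
  refine tendsto_measure_of_ae_tendsto_indicator (nhds p₀) (B := cubeIcc d)
    ((hF.tri _ (hXc p₀)).measurableSet_image (measurableSet_clBox _ _))
    (fun p => (hF.tri _ (hXc p)).measurableSet_image (measurableSet_clBox _ _))
    (measurableSet_cubeIcc d) (isCompact_cubeIcc d).measure_lt_top.ne
    (Eventually.of_forall fun p => ?_) ?_
  · rintro _ ⟨y, hy, rfl⟩
    exact cubeIco_subset_cubeIcc d ((hF.tri _ (hXc p)).bijOn.mapsTo hy.1)
  have hnA : ∀ᵐ u, ∀ i, u ∉ F (X p₀) '' (cubeIco d ∩ {y | y i = A p₀ i}) :=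
    ae_all_iff.2 fun i => measure_eq_zero_iff_ae_notMem.1
      ((hF.tri _ (hXc p₀)).volume_hyperplane i _)
  have hnB : ∀ᵐ u, ∀ i, u ∉ F (X p₀) '' (cubeIco d ∩ {y | y i = B p₀ i}) :=
    ae_all_iff.2 fun i => measure_eq_zero_iff_ae_notMem.1
      ((hF.tri _ (hXc p₀)).volume_hyperplane i _)
  filter_upwards [hnA, hnB] with u huA huB
  by_cases hu : u ∈ cubeIco d
  swap
  · refine Eventually.of_forall fun p => iff_of_false ?_ ?_
    all_goals
      rintro ⟨y, hy, rfl⟩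
      exact hu ((hF.tri _ (hXc _)).bijOn.mapsTo hy.1)
  choose G hGI hG using fun p => (hF.tri _ (hXc p)).bijOn.surjOn hu
  have hmem : ∀ p, u ∈ boxImage (F (X p)) (A p) (B p) ↔
      ∀ i, A p i ≤ G p i ∧ G p i ≤ B p i := by
    intro p
    constructor
    · rintro ⟨y, hy, hyu⟩ i
      have : y = G p := (hF.tri _ (hXc p)).bijOn.injOn hy.1 (hGI p) (hyu.trans (hG p).symm)
      exact this ▸ hy.2 i trivial
    · exact fun hp => ⟨G p, ⟨hGI p, fun i _ => hp i⟩, hG p⟩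
  have hGt : Tendsto G (nhds p₀) (nhds (G p₀)) :=
    tendsto_inverse hFc hX hXc (hF.tri _ (hXc p₀)).injOn
      (fun p => cubeIco_subset_cubeIcc d (hGI p)) hG
  -- A strict inequality between limits persists, in whichever direction it points.
  have key : ∀ {f g : P → ℝ}, Tendsto f (nhds p₀) (nhds (f p₀)) →
      Tendsto g (nhds p₀) (nhds (g p₀)) → f p₀ ≠ g p₀ →
      ∀ᶠ p in nhds p₀, (f p ≤ g p ↔ f p₀ ≤ g p₀) := by
    intro f g hf hg hne
    rcases hne.lt_or_gt with hlt | hlt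
    · filter_upwards [hf.eventually_lt hg hlt] with p hp
      exact iff_of_true hp.le hlt.le
    · filter_upwards [hg.eventually_lt hf hlt] with p hp
      exact iff_of_false hp.not_ge hlt.not_ge
  have hev : ∀ᶠ p in nhds p₀, ∀ i, (A p i ≤ G p i ↔ A p₀ i ≤ G p₀ i) ∧
      (G p i ≤ B p i ↔ G p₀ i ≤ B p₀ i) := by
    refine eventually_all.2 fun i => ?_
    have hGi := tendsto_pi_nhds.1 hGt i
    refine (key (tendsto_pi_nhds.1 (hA.tendsto p₀) i) hGi ?_).and
      (key hGi (tendsto_pi_nhds.1 (hB.tendsto p₀) i) ?_)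
    · exact fun he => huA i ⟨G p₀, ⟨hGI p₀, he.symm⟩, hG p₀⟩
    · exact fun he => huB i ⟨G p₀, ⟨hGI p₀, he⟩, hG p₀⟩
  filter_upwards [hev] with p hp
  rw [hmem, hmem]
  exact forall_congr' fun i => and_congr (hp i).1 (hp i).2

/-- The functions `x ↦ K(x, B)`, for `B` a box, are uniformly equicontinuous on the cube. -/
lemma kernel_equicontinuous {d : ℕ}
    {K : Kernel (Fin d → ℝ) (Fin d → ℝ)} [IsMarkovKernel K]
    {F : (Fin d → ℝ) → (Fin d → ℝ) → (Fin d → ℝ)}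
    (hF : IsTriangularKernel K F)
    (hFc : ContinuousOn (Function.uncurry F) (cubeIcc d ×ˢ cubeIcc d))
    (hKc : ∀ x ∈ cubeIcc d, K x (cubeIcc d) = 1) {ε : ℝ} (hε : 0 < ε) :
    ∃ δ > 0, ∀ x ∈ cubeIcc d, ∀ x' ∈ cubeIcc d, dist x x' < δ → ∀ a b, IsGoodBox a b →
      |(K x (clBox a b)).toReal - (K x' (clBox a b)).toReal| < ε := by
  set D : Set ((Fin d → ℝ) × (Fin d → ℝ) × (Fin d → ℝ)) :=
    cubeIcc d ×ˢ cubeIcc d ×ˢ cubeIcc d with hD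
  have hDc : IsCompact D :=
    (isCompact_cubeIcc d).prod ((isCompact_cubeIcc d).prod (isCompact_cubeIcc d))
  have hfin : ∀ x ∈ cubeIcc d, ∀ a b, volume (boxImage (F x) a b) ≠ ⊤ := by
    intro x hx a b
    refine ((measure_mono ?_).trans_lt (isCompact_cubeIcc d).measure_lt_top).ne
    rintro _ ⟨y, hy, rfl⟩
    exact cubeIco_subset_cubeIcc d ((hF.tri x hx).bijOn.mapsTo hy.1)
  have hcont : ContinuousOn (fun q : (Fin d → ℝ) × (Fin d → ℝ) × (Fin d → ℝ) =>
      (volume (boxImage (F q.1) q.2.1 q.2.2)).toReal) D := by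
    rw [continuousOn_iff_continuous_domRestrict]
    have h1 : Continuous fun p : D => volume (boxImage (F p.1.1) p.1.2.1 p.1.2.2) :=
      continuous_volume_boxImage hF hFc (by fun_prop) (by fun_prop) (by fun_prop)
        fun p => p.2.1
    exact continuous_iff_continuousAt.2 fun p =>
      (ENNReal.tendsto_toReal (hfin _ p.2.1 _ _)).comp (h1.tendsto p)
  obtain ⟨δ, hδ, h⟩ := Metric.uniformContinuousOn_iff.1
    (hDc.uniformContinuousOn_of_continuous hcont) ε hε
  refine ⟨δ, hδ, fun x hx x' hx' hxx a b hab => ?_⟩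
  have ha : a ∈ cubeIcc d := fun i _ => ⟨(hab i).1, ((hab i).2.1.trans (hab i).2.2).le⟩
  have hb : b ∈ cubeIcc d := fun i _ => ⟨(hab i).1.trans (hab i).2.1.le, (hab i).2.2.le⟩
  have := h (x, a, b) ⟨hx, ha, hb⟩ (x', a, b) ⟨hx', ha, hb⟩ 
    (by simpa [Prod.dist_eq] using hxx)
  rwa [Real.dist_eq, ← (hF.tri x hx).measure_clBox (hKc x hx) hab,
    ← (hF.tri x' hx').measure_clBox (hKc x' hx') hab] at this

/-! ### Boxes controlled by the extreme norm -/

lemma abs_toReal_sub_le_one {α : Type*} [MeasurableSpace α] (μ ν : Measure α)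
    [IsProbabilityMeasure μ] [IsProbabilityMeasure ν] (s : Set α) :
    |(μ s).toReal - (ν s).toReal| ≤ 1 := by
  have h1 : (μ s).toReal ≤ 1 := measureReal_le_one
  have h2 : (ν s).toReal ≤ 1 := measureReal_le_one
  have h3 : 0 ≤ (μ s).toReal := ENNReal.toReal_nonneg
  have h4 : 0 ≤ (ν s).toReal := ENNReal.toReal_nonneg
  rw [abs_le]
  constructor <;> linarith

lemma extDist_nonneg {d : ℕ} (μ ν : Measure (Fin d → ℝ)) : 0 ≤ extDist μ ν :=
  Real.iSup_nonneg fun _ => abs_nonneg _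

lemma abs_clBox_sub_le_of_isGoodBox {d : ℕ} (μ ν : Measure (Fin d → ℝ))
    [IsProbabilityMeasure μ] [IsProbabilityMeasure ν] {a b : Fin d → ℝ} (h : IsGoodBox a b) :
    |(μ (clBox a b)).toReal - (ν (clBox a b)).toReal| ≤ extDist μ ν := by
  refine le_ciSup (f := fun p : {q : (Fin d → ℝ) × (Fin d → ℝ) // IsGoodBox q.1 q.2} =>
    |(μ (clBox p.1.1 p.1.2)).toReal - (ν (clBox p.1.1 p.1.2)).toReal|) ?_ ⟨(a, b), h⟩
  refine ⟨1, ?_⟩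
  rintro _ ⟨p, rfl⟩
  exact abs_toReal_sub_le_one μ ν _

/-- Degenerate boxes are decreasing limits of nondegenerate ones, and so obey the same bound. -/
lemma abs_clBox_sub_le {d : ℕ} (μ ν : Measure (Fin d → ℝ))
    [IsProbabilityMeasure μ] [IsProbabilityMeasure ν] {a b : Fin d → ℝ}
    (ha : ∀ i, 0 ≤ a i) (hb : ∀ i, b i < 1) :
    |(μ (clBox a b)).toReal - (ν (clBox a b)).toReal| ≤ extDist μ ν := by
  by_cases hab : ∀ i, a i ≤ b i
  swap
  · have : clBox a b = ∅ := by
      push Not at hab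
      obtain ⟨i, hi⟩ := hab
      exact Set.univ_pi_eq_empty (Set.Icc_eq_empty hi.not_ge)
    simpa [this] using extDist_nonneg μ ν
  let β : ℕ → Fin d → ℝ := fun n i => b i + (1 - b i) * (1 / ((n : ℝ) + 2))
  have hβlt : ∀ n i, b i < β n i := fun n i => by
    have : 0 < (1 - b i) * (1 / ((n : ℝ) + 2)) := mul_pos (by linarith [hb i]) (by positivity)
    change b i < b i + _
    linarith
  have hβ1 : ∀ n i, β n i < 1 := fun n i => by
    have h1 : 1 / ((n : ℝ) + 2) < 1 := by
      rw [div_lt_one (by positivity)]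
      have : (0 : ℝ) ≤ n := Nat.cast_nonneg n
      linarith
    have := mul_lt_mul_of_pos_left h1 (sub_pos.2 (hb i))
    change b i + _ < 1
    linarith
  have hanti : Antitone fun n => clBox a (β n) := by
    intro m n hmn
    refine Set.pi_mono fun i _ => Set.Icc_subset_Icc_right ?_
    have : (m : ℝ) ≤ n := Nat.cast_le.2 hmn
    have h0 : 0 ≤ 1 - b i := by linarith [hb i]
    change b i + _ ≤ b i + _
    gcongr
  have hlim : ∀ i, Tendsto (fun n => β n i) atTop (nhds (b i)) := fun i => by
    have h1 : Tendsto (fun n : ℕ => 1 / ((n : ℝ) + 2)) atTop (nhds 0) :=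
      tendsto_const_nhds.div_atTop
        (tendsto_atTop_add_const_right _ _ tendsto_natCast_atTop_atTop)
    have h2 := (h1.const_mul (1 - b i)).const_add (b i)
    rwa [mul_zero, add_zero] at h2
  have hInter : ⋂ n, clBox a (β n) = clBox a b := by
    ext y
    simp only [clBox, Set.mem_iInter, Set.mem_univ_pi, Set.mem_Icc]
    refine ⟨fun h i => ⟨(h 0 i).1, ge_of_tendsto' (hlim i) fun n => (h n i).2⟩,
      fun h n i => ⟨(h i).1, (h i).2.trans (hβlt n i).le⟩⟩
  have ht : ∀ (ρ : Measure (Fin d → ℝ)) [IsProbabilityMeasure ρ],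
      Tendsto (fun n => (ρ (clBox a (β n))).toReal) atTop (nhds (ρ (clBox a b)).toReal) := by
    intro ρ _
    have := tendsto_measure_iInter_atTop (μ := ρ)
      (fun n => (measurableSet_clBox a (β n)).nullMeasurableSet) hanti
      ⟨0, measure_ne_top _ _⟩
    rw [hInter] at this
    exact (ENNReal.tendsto_toReal (measure_ne_top _ _)).comp this
  exact le_of_tendsto' ((ht μ).sub (ht ν)).abs fun n =>
    abs_clBox_sub_le_of_isGoodBox μ ν
      fun i => ⟨ha i, (hab i).trans_lt (hβlt n i), hβ1 n i⟩

/-- A closed box cut by a half-open one is an increasing union of closed boxes, and so obeys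
the same bound. -/
lemma abs_clBox_inter_sub_le {d : ℕ} (μ ν : Measure (Fin d → ℝ))
    [IsProbabilityMeasure μ] [IsProbabilityMeasure ν] {a b : Fin d → ℝ}
    (ha : ∀ i, 0 ≤ a i) (hb : ∀ i, b i < 1) (p q : Fin d → ℝ) :
    |(μ (clBox a b ∩ Set.univ.pi fun i => Set.Ico (p i) (q i))).toReal -
      (ν (clBox a b ∩ Set.univ.pi fun i => Set.Ico (p i) (q i))).toReal| ≤ extDist μ ν := by
  let α : Fin d → ℝ := fun i => max (a i) (p i)
  let β : ℕ → Fin d → ℝ := fun n i => min (b i) (q i - 1 / ((n : ℝ) + 1))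
  have hmono : Monotone fun n => clBox α (β n) := by
    intro m n hmn
    refine Set.pi_mono fun i _ => Set.Icc_subset_Icc_right ?_
    exact min_le_min le_rfl (sub_le_sub_left (Nat.one_div_le_one_div hmn) _)
  have hUnion : ⋃ n, clBox α (β n) =
      clBox a b ∩ Set.univ.pi fun i => Set.Ico (p i) (q i) := by
    ext y
    simp only [clBox, α, β, Set.mem_iUnion, Set.mem_univ_pi, Set.mem_Icc, Set.mem_inter_iff,
      Set.mem_Ico, max_le_iff, le_min_iff]
    constructor
    · rintro ⟨n, h⟩
      refine ⟨fun i => ⟨(h i).1.1, (h i).2.1⟩, fun i => ⟨(h i).1.2, (h i).2.2.trans_lt ?_⟩⟩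
      exact sub_lt_self _ Nat.one_div_pos_of_nat
    · rintro ⟨h1, h2⟩
      have : ∀ i, ∀ᶠ n : ℕ in atTop, 1 / ((n : ℝ) + 1) < q i - y i := fun i =>
        tendsto_one_div_add_atTop_nhds_zero_nat.eventually_lt_const (sub_pos.2 (h2 i).2)
      obtain ⟨n, hn⟩ := (eventually_all.2 this).exists
      exact ⟨n, fun i => ⟨⟨(h1 i).1, (h2 i).1⟩, (h1 i).2, by linarith [hn i]⟩⟩
  have ht : ∀ (ρ : Measure (Fin d → ℝ)) [IsProbabilityMeasure ρ],
      Tendsto (fun n => (ρ (clBox α (β n))).toReal) atTop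
        (nhds (ρ (clBox a b ∩ Set.univ.pi fun i => Set.Ico (p i) (q i))).toReal) := by
    intro ρ _
    have := tendsto_measure_iUnion_atTop (μ := ρ) hmono
    rw [hUnion] at this
    exact (ENNReal.tendsto_toReal (measure_ne_top _ _)).comp this
  exact le_of_tendsto' ((ht μ).sub (ht ν)).abs fun n =>
    abs_clBox_sub_le μ ν (fun i => (ha i).trans (le_max_left _ _))
      fun i => (min_le_left _ _).trans_lt (hb i)

/-! ### Integrals of equicontinuous functions over boxes -/

/-- The cell `∏ᵢ [kᵢ/M, (kᵢ+1)/M)` of the regular grid of mesh `1/M`. -/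
def gridCell {d M : ℕ} (k : Fin d → Fin M) : Set (Fin d → ℝ) :=
  Set.univ.pi fun i => Set.Ico ((k i : ℝ) / M) (((k i : ℝ) + 1) / M)

/-- The corner `k/M` of a grid cell. -/
def gridPoint {d M : ℕ} (k : Fin d → Fin M) : Fin d → ℝ := fun i => (k i : ℝ) / M

lemma gridPoint_mem {d M : ℕ} (k : Fin d → Fin M) : gridPoint k ∈ cubeIcc d := by
  intro i _
  refine ⟨by unfold gridPoint; positivity, div_le_one_of_le₀ ?_ (by positivity)⟩
  exact_mod_cast (k i).2.le

lemma floor_of_mem_gridCell {d M : ℕ} {k : Fin d → Fin M} {y : Fin d → ℝ}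
    (hy : y ∈ gridCell k) (i : Fin d) : ⌊M * y i⌋₊ = k i := by
  have hM : (0 : ℝ) < M := by exact_mod_cast (k i).pos
  have h := hy i trivial
  rw [Nat.floor_eq_iff (mul_nonneg hM.le (le_trans (by positivity) h.1))]
  rw [Set.mem_Ico, div_le_iff₀ hM, lt_div_iff₀ hM] at h
  rwa [mul_comm (M : ℝ)]

lemma pairwise_disjoint_gridCell (d M : ℕ) :
    Pairwise (Function.onFun Disjoint (gridCell : (Fin d → Fin M) → Set (Fin d → ℝ))) := by
  intro k l hkl
  rw [Function.onFun, Set.disjoint_left]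
  intro y hk hl
  refine hkl (funext fun i => Fin.ext ?_)
  rw [← floor_of_mem_gridCell hk i, floor_of_mem_gridCell hl i]

lemma cubeIco_subset_iUnion_gridCell (d : ℕ) {M : ℕ} (hM : 0 < M) :
    cubeIco d ⊆ ⋃ k : Fin d → Fin M, gridCell k := by
  intro y hy
  have hM' : (0 : ℝ) < M := by exact_mod_cast hM
  have h0 : ∀ i, 0 ≤ (M : ℝ) * y i := fun i => mul_nonneg hM'.le (hy i trivial).1
  refine Set.mem_iUnion.2 ⟨fun i => ⟨⌊(M : ℝ) * y i⌋₊, ?_⟩, fun i _ => ?_⟩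
  · rw [Nat.floor_lt (h0 i)]
    nlinarith [(hy i trivial).2]
  · rw [Set.mem_Ico, div_le_iff₀ hM', lt_div_iff₀ hM', mul_comm (y i)]
    exact ⟨Nat.floor_le (h0 i), Nat.lt_floor_add_one _⟩

lemma dist_gridPoint_le {d M : ℕ} {k : Fin d → Fin M} {y : Fin d → ℝ}
    (hy : y ∈ gridCell k) : dist y (gridPoint k) ≤ 1 / M := by
  refine (dist_pi_le_iff (by positivity)).2 fun i => ?_
  have h := hy i trivial
  rw [Set.mem_Ico, add_div] at h
  rw [Real.dist_eq, gridPoint, abs_of_nonneg (by linarith [h.1])]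
  linarith [h.2]

/-- The difference of the integrals over a box of a function which oscillates by at most `ε` at
scale `δ`: replacing it by its value at the corner of each cell of a grid of mesh below `δ`
costs `ε` for each measure, and the extreme norm controls each cell. -/
lemma abs_setIntegral_sub_le {d : ℕ} (μ ν : Measure (Fin d → ℝ))
    [IsProbabilityMeasure μ] [IsProbabilityMeasure ν] {φ : (Fin d → ℝ) → ℝ}
    (hφm : Measurable φ) (hφ0 : ∀ x, 0 ≤ φ x) (hφ1 : ∀ x, φ x ≤ 1) {ε δ : ℝ}
    (hφ : ∀ x ∈ cubeIcc d, ∀ x' ∈ cubeIcc d, dist x x' < δ → |φ x - φ x'| ≤ ε)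
    {M : ℕ} (hM : 0 < M) (hMδ : 1 / (M : ℝ) < δ) {a b : Fin d → ℝ} (hab : IsGoodBox a b) :
    |∫ x in clBox a b, φ x ∂μ - ∫ x in clBox a b, φ x ∂ν| ≤
      2 * ε + (Fintype.card (Fin d → Fin M)) * extDist μ ν := by
  have hcell : ∀ k : Fin d → Fin M, MeasurableSet (clBox a b ∩ gridCell k) := fun k =>
    (measurableSet_clBox a b).inter (MeasurableSet.univ_pi fun _ => measurableSet_Ico)
  have hdisj : Pairwise (Function.onFun Disjoint
      fun k : Fin d → Fin M => clBox a b ∩ gridCell k) := fun k l hkl =>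
    (pairwise_disjoint_gridCell d M hkl).mono inter_subset_right inter_subset_right
  have hUnion : ⋃ k : Fin d → Fin M, clBox a b ∩ gridCell k = clBox a b := by
    rw [← Set.inter_iUnion, Set.inter_eq_left]
    exact (clBox_subset_cubeIco hab).trans (cubeIco_subset_iUnion_gridCell d hM)
  have hint : ∀ (ρ : Measure (Fin d → ℝ)) [IsProbabilityMeasure ρ], Integrable φ ρ := by
    intro ρ _
    refine Integrable.of_bound hφm.aestronglyMeasurable 1 (Eventually.of_forall fun x => ?_)
    rw [Real.norm_of_nonneg (hφ0 x)]
    exact hφ1 x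
  have happrox : ∀ (ρ : Measure (Fin d → ℝ)) [IsProbabilityMeasure ρ],
      |∫ x in clBox a b, φ x ∂ρ -
        ∑ k : Fin d → Fin M, φ (gridPoint k) * ρ.real (clBox a b ∩ gridCell k)| ≤ ε := by
    intro ρ _
    have h0 : 0 ≤ ε := by
      have hx : (0 : Fin d → ℝ) ∈ cubeIcc d := fun _ _ => ⟨le_rfl, zero_le_one⟩
      have hδ : 0 < δ := lt_of_le_of_lt (by positivity) hMδ
      exact (abs_nonneg _).trans (hφ 0 hx 0 hx (by simpa using hδ))
    have hsum : ∫ x in clBox a b, φ x ∂ρ =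
        ∑ k : Fin d → Fin M, ∫ x in clBox a b ∩ gridCell k, φ x ∂ρ := by
      rw [← integral_iUnion_fintype hcell hdisj fun k => (hint ρ).integrableOn, hUnion]
    have hmass : ∑ k : Fin d → Fin M, ρ.real (clBox a b ∩ gridCell k) =
        ρ.real (clBox a b) := by
      rw [← measureReal_iUnion_fintype hdisj hcell, hUnion]
    rw [hsum, ← Finset.sum_sub_distrib]
    calc _ ≤ ∑ k : Fin d → Fin M, |∫ x in clBox a b ∩ gridCell k, φ x ∂ρ -
            φ (gridPoint k) * ρ.real (clBox a b ∩ gridCell k)| := Finset.abs_sum_le_sum_abs _ _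
      _ ≤ ∑ k : Fin d → Fin M, ε * ρ.real (clBox a b ∩ gridCell k) := by
          refine Finset.sum_le_sum fun k _ => ?_
          have : ∫ x in clBox a b ∩ gridCell k, φ x ∂ρ -
              φ (gridPoint k) * ρ.real (clBox a b ∩ gridCell k) =
              ∫ x in clBox a b ∩ gridCell k, (φ x - φ (gridPoint k)) ∂ρ := by
            rw [integral_sub (hint ρ).integrableOn (integrable_const _), setIntegral_const,
              smul_eq_mul, mul_comm]
          rw [this, ← Real.norm_eq_abs]
          refine norm_setIntegral_le_of_norm_le_const (measure_lt_top ρ _) fun x hx => ?_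
          exact hφ x (cubeIco_subset_cubeIcc d (clBox_subset_cubeIco hab hx.1)) _
            (gridPoint_mem k) ((dist_gridPoint_le hx.2).trans_lt hMδ)
      _ = ε * ρ.real (clBox a b) := by rw [← Finset.mul_sum, hmass]
      _ ≤ ε := mul_le_of_le_one_right h0 measureReal_le_one
  have hdiff : |∑ k : Fin d → Fin M, φ (gridPoint k) * μ.real (clBox a b ∩ gridCell k) -
      ∑ k : Fin d → Fin M, φ (gridPoint k) * ν.real (clBox a b ∩ gridCell k)| ≤
      (Fintype.card (Fin d → Fin M)) * extDist μ ν := by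
    rw [← Finset.sum_sub_distrib, ← nsmul_eq_mul, ← Finset.card_univ]
    refine (Finset.abs_sum_le_sum_abs _ _).trans (Finset.sum_le_card_nsmul _ _ _ fun k _ => ?_)
    rw [← mul_sub, abs_mul, abs_of_nonneg (hφ0 _)]
    exact (mul_le_of_le_one_left (abs_nonneg _) (hφ1 _)).trans
      (abs_clBox_inter_sub_le μ ν (fun i => (hab i).1) (fun i => (hab i).2.2) _ _)
  have h1 := abs_le.1 (happrox μ)
  have h2 := abs_le.1 (happrox ν)
  have h3 := abs_le.1 hdiff
  exact abs_le.2 ⟨by linarith [h1.1, h2.2, h3.1], by linarith [h1.2, h2.1, h3.2]⟩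

/-! ### Convergence of the joint laws -/

lemma toReal_compProd_prod {d₁ d₂ : ℕ} (μ : Measure (Fin d₁ → ℝ)) [IsProbabilityMeasure μ]
    (κ : Kernel (Fin d₁ → ℝ) (Fin d₂ → ℝ)) [IsMarkovKernel κ] {s : Set (Fin d₁ → ℝ)}
    {t : Set (Fin d₂ → ℝ)} (hs : MeasurableSet s) (ht : MeasurableSet t) :
    ((μ.compProd κ) (s ×ˢ t)).toReal = ∫ x in s, (κ x t).toReal ∂μ := by
  rw [Measure.compProd_apply_prod hs ht, integral_toReal]
  · exact (κ.measurable_coe ht).aemeasurable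
  · exact Eventually.of_forall fun x => measure_lt_top _ _

/-- Replacing the kernel inside a joint law costs the uniform distance between the kernels. -/
lemma abs_setIntegral_kernel_sub_le {d : ℕ} (μ : Measure (Fin d → ℝ)) [IsProbabilityMeasure μ]
    (κ η : Kernel (Fin d → ℝ) (Fin d → ℝ)) [IsMarkovKernel κ] [IsMarkovKernel η] {ε : ℝ}
    (hε : 0 ≤ ε) (h : ∀ x ∈ cubeIcc d, extDist (κ x) (η x) ≤ ε) {a b a' b' : Fin d → ℝ}
    (hab : IsGoodBox a b) (hab' : IsGoodBox a' b') :
    |∫ x in clBox a b, (κ x (clBox a' b')).toReal ∂μ -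
      ∫ x in clBox a b, (η x (clBox a' b')).toReal ∂μ| ≤ ε := by
  have hint : ∀ (ρ : Kernel (Fin d → ℝ) (Fin d → ℝ)) [IsMarkovKernel ρ],
      Integrable (fun x => (ρ x (clBox a' b')).toReal) μ := by
    intro ρ _
    refine Integrable.of_bound
      (ρ.measurable_coe (measurableSet_clBox a' b')).ennreal_toReal.aestronglyMeasurable 1
      (Eventually.of_forall fun x => ?_)
    rw [Real.norm_of_nonneg ENNReal.toReal_nonneg]
    exact measureReal_le_one
  rw [← integral_sub (hint κ).integrableOn (hint η).integrableOn, ← Real.norm_eq_abs]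
  refine (norm_setIntegral_le_of_norm_le_const (C := ε) (measure_lt_top μ _)
    fun x hx => ?_).trans (mul_le_of_le_one_right hε measureReal_le_one)
  exact (abs_clBox_sub_le_of_isGoodBox (κ x) (η x) hab').trans
    (h x (cubeIco_subset_cubeIcc d (clBox_subset_cubeIco hab hx)))

/-- claim (eq:ind) in the proof of Theorem 2: if `μ^N → μ` in extreme
norm with `μ` absolutely continuous, and the Markov kernels `K^N` converge to `K`
uniformly in extreme norm, where `K` admits a jointly Hölder continuous triangular
transform, then `μ^N ⊗ K^N → μ ⊗ K` in extreme norm on `[0,1]^{2d}`. -/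
theorem compProd_extDist_tendsto_of_uniform_kernel_convergence
    {d : ℕ} (hd : 1 ≤ d)
    (μseq : ℕ → Measure (Fin d → ℝ)) (μ : Measure (Fin d → ℝ))
    [∀ N, IsProbabilityMeasure (μseq N)] [IsProbabilityMeasure μ]
    (hseqc : ∀ N, μseq N (cubeIcc d) = 1) (hμc : μ (cubeIcc d) = 1)
    (hconv : Tendsto (fun N => extDist (μseq N) μ) atTop (nhds 0))
    (hac : μ ≪ (volume : Measure (Fin d → ℝ)))
    (K : Kernel (Fin d → ℝ) (Fin d → ℝ))
    (KN : ℕ → Kernel (Fin d → ℝ) (Fin d → ℝ))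
    [IsMarkovKernel K] [∀ N, IsMarkovKernel (KN N)]
    (hKc : ∀ x ∈ cubeIcc d, K x (cubeIcc d) = 1)
    (hKNc : ∀ N, ∀ x ∈ cubeIcc d, (KN N) x (cubeIcc d) = 1)
    (hKconv : ∀ ε > 0, ∀ᶠ N in atTop, ∀ x ∈ cubeIcc d, extDist ((KN N) x) (K x) ≤ ε)
    (F : (Fin d → ℝ) → (Fin d → ℝ) → (Fin d → ℝ))
    (hF : IsTriangularKernel K F) (hFH : HolderJointly F) :
    Tendsto (fun N => extDistProd ((μseq N).compProd (KN N)) (μ.compProd K))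
      atTop (nhds 0) := by
  rw [Metric.tendsto_atTop]
  intro ε hε
  obtain ⟨δ, hδ, hequi⟩ := kernel_equicontinuous hF hFH.continuousOn hKc
    (show 0 < ε / 8 by positivity)
  obtain ⟨m, hm⟩ := exists_nat_one_div_lt hδ
  set c : ℝ := ((Fintype.card (Fin d → Fin (m + 1)) : ℕ) : ℝ) with hc
  have hsmall : ∀ᶠ N in atTop, c * extDist (μseq N) μ < ε / 4 := by
    have : Tendsto (fun N => c * extDist (μseq N) μ) atTop (nhds 0) := by
      simpa using hconv.const_mul c
    exact this.eventually_lt_const (by positivity)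
  obtain ⟨N₀, hN₀⟩ := eventually_atTop.1 (hsmall.and (hKconv (ε / 4) (by positivity)))
  refine ⟨N₀, fun N hN => ?_⟩
  obtain ⟨hμN, hKN⟩ := hN₀ N hN
  rw [Real.dist_0_eq_abs, extDistProd, abs_of_nonneg (Real.iSup_nonneg fun _ => abs_nonneg _)]
  refine lt_of_le_of_lt (Real.iSup_le (a := 3 * ε / 4) ?_ (by positivity)) (by linarith)
  rintro ⟨⟨⟨a, b⟩, ⟨a', b'⟩⟩, hab, hab'⟩
  dsimp only at hab hab' ⊢
  have hB := measurableSet_clBox a b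
  have hB' := measurableSet_clBox a' b'
  rw [toReal_compProd_prod _ _ hB hB', toReal_compProd_prod _ _ hB hB']
  have h1 := abs_setIntegral_kernel_sub_le (μseq N) (KN N) K (by positivity) hKN hab hab'
  have h2 := abs_setIntegral_sub_le (μseq N) μ (φ := fun x => (K x (clBox a' b')).toReal)
    (K.measurable_coe hB').ennreal_toReal (fun _ => ENNReal.toReal_nonneg)
    (fun _ => measureReal_le_one)
    (fun x hx x' hx' hxx => (hequi x hx x' hx' hxx a' b' hab').le)
    (Nat.succ_pos m) (by exact_mod_cast hm) hab
  refine (abs_sub_le _ _ _).trans ((add_le_add h1 h2).trans ?_)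
  linarith
end
end
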